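/- Let d ≥ 1, let μ be a finite positive-semidefinite-matrix-valued Borel measure on ℝ, let w ∈ ℝ^d, and let Ξ be the associated matrix-valued function Ξ_{k,q}(t) = ∫_ℝ (cos(tν) − 1) μ_{k,q}(dν). Let E : ℝ → ℝ be a Schwartz function with ∫_ℝ E(s) ds = 0 and Fourier transform Ê(ν) := ∫_ℝ e^{−iνs} E(s) ds. Then ∫_ℝ ∫_ℝ ⟨w, Ξ(s₁−s₂) w⟩ E(s₁) E(s₂) ds₂ ds₁ = ∫_ℝ |Ê(ν)|² ⟨w, μ(dν) w⟩, and ∫_ℝ (∫_{−∞}^{s₁} ⟨w, Ξ(s₁−s₂) w⟩ E(s₂) ds₂) E(s₁) ds₁ = ½ ∫_ℝ |Ê(ν)|² ⟨w, μ(dν) w⟩; in particular both quantities are nonnegative. Here ⟨w, μ(·) w⟩ denotes the finite positive Borel measure X ↦ ⟨w, μ(X) w⟩. -/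

import Mathlib

open MeasureTheory

/-- A finite positive-semidefinite-matrix-valued Borel measure on `ℝ`: a countably additive map
from the Borel σ-algebra of `ℝ` to the real symmetric `d×d` matrices taking positive
semidefinite values on every Borel set; it is encoded through its entries, which are finite
signed Borel measures on `ℝ`. -/
structure MatrixMeasure (d : ℕ) where
  /-- the entries, as finite signed Borel measures -/
  entry : Fin d → Fin d → SignedMeasure ℝ
  /-- on every Borel set the value is a (symmetric) positive semidefinite real matrix -/
  posSemidef : ∀ X : Set ℝ, MeasurableSet X →
    (Matrix.of fun k q => entry k q X).PosSemidef

/-- The integral `∫ f dν` of a function against a finite signed Borel measure `ν`, defined via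
the Jordan decomposition of `ν`. -/
noncomputable def sintegral (ν : SignedMeasure ℝ) (f : ℝ → ℝ) : ℝ :=
  (∫ x, f x ∂ν.toJordanDecomposition.posPart) - ∫ x, f x ∂ν.toJordanDecomposition.negPart

/-- The matrix-valued function `Ξ(t)` with entries
`Ξ_{k,q}(t) := ∫ (cos(tν) − 1) μ_{k,q}(dν)`. -/
noncomputable def Xi {d : ℕ} (μ : MatrixMeasure d) (t : ℝ) : Matrix (Fin d) (Fin d) ℝ :=
  Matrix.of fun k q => sintegral (μ.entry k q) (fun ν => Real.cos (t * ν) - 1)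

/-- The matrix-valued measure `μ` is symmetric: `μ(X) = μ(−X)` for every Borel set `X`. -/
def MatrixMeasure.IsSymmetric {d : ℕ} (μ : MatrixMeasure d) : Prop :=
  ∀ (k q : Fin d) (X : Set ℝ), MeasurableSet X → μ.entry k q X = μ.entry k q (-X)

/-- The quadratic form `⟨w, M w⟩ = ∑_{k,q} w_k M_{k,q} w_q` of a real matrix. -/
def quadForm {d : ℕ} (w : Fin d → ℝ) (M : Matrix (Fin d) (Fin d) ℝ) : ℝ :=
  ∑ k : Fin d, ∑ q : Fin d, w k * M k q * w q

/-- Fourier transform `Ê(ν) := ∫ e^{−iνs} E(s) ds` of a Schwartz function. -/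
noncomputable def fhat (E : SchwartzMap ℝ ℝ) (ν : ℝ) : ℂ :=
  ∫ s : ℝ, Complex.exp (-(Complex.I * ν * s)) * (E s : ℂ)

/-!
Contracting with `w` replaces the signed entries of `μ` by the single positive measure
`⟨w, μ(·) w⟩`, so that `⟨w, Ξ(t) w⟩ = ∫ (cos (tν) - 1) ⟨w, μ(dν) w⟩`. By Fubini, the double
integral against `E(s₁) E(s₂)` may be computed one frequency `ν` at a time: `cos ((s₁ - s₂)ν)` is
the real part of `e^{-is₁ν}` times the conjugate of `e^{-is₂ν}` and contributes `|Ê(ν)|²`, whereas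
the constant `-1` contributes `-(∫ E)² = 0`. Since cosine is even, the integrand is symmetric in
`(s₁, s₂)`, and the half plane `s₂ ≤ s₁` carries half of its integral.
-/

open Set Function
open scoped ComplexConjugate RealInnerProductSpace

section SymmetricKernel

variable {α β F : Type*} [MeasurableSpace α] [MeasurableSpace β] [NormedAddCommGroup F]
  [NormedSpace ℝ F]

lemma setIntegral_prod_eq_integral_setIntegral {ρ : Measure α} {σ : Measure β} [SFinite ρ]
    [SFinite σ] {f : α × β → F} {S : Set (α × β)} (hS : MeasurableSet S)
    (hf : IntegrableOn f S (ρ.prod σ)) :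
    ∫ p in S, f p ∂ρ.prod σ = ∫ x, ∫ y in Prod.mk x ⁻¹' S, f (x, y) ∂σ ∂ρ := by
  rw [← integral_indicator hS, integral_prod _ (hf.integrable_indicator hS)]
  refine integral_congr_ae (.of_forall fun x ↦ ?_)
  exact integral_indicator (f := fun y ↦ f (x, y)) (measurable_prodMk_left hS)

variable [LinearOrder α] [TopologicalSpace α] [OrderClosedTopology α]
  [SecondCountableTopology α] [OpensMeasurableSpace α]

lemma integral_integral_Iic_eq_half_of_symm {ρ : Measure α} [SFinite ρ] [NullSingletonClass ρ]
    {K : α → α → F} (hK : Integrable (uncurry K) (ρ.prod ρ)) (hsymm : ∀ x y, K x y = K y x) :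
    ∫ x, ∫ y in Iic x, K x y ∂ρ ∂ρ = (1 / 2 : ℝ) • ∫ x, ∫ y, K x y ∂ρ ∂ρ := by
  have hle : MeasurableSet {p : α × α | p.2 ≤ p.1} :=
    measurableSet_le measurable_snd measurable_fst
  have hlt : MeasurableSet {p : α × α | p.2 < p.1} :=
    measurableSet_lt measurable_snd measurable_fst
  have hlower : ∫ p in {p | p.2 ≤ p.1}, uncurry K p ∂ρ.prod ρ
      = ∫ x, ∫ y in Iic x, K x y ∂ρ ∂ρ :=
    setIntegral_prod_eq_integral_setIntegral hle hK.integrableOn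
  have hupper : ∫ p in {p | p.2 ≤ p.1}ᶜ, uncurry K p ∂ρ.prod ρ
      = ∫ x, ∫ y in Iic x, K x y ∂ρ ∂ρ := calc
    _ = ∫ p in Prod.swap ⁻¹' {p | p.2 < p.1}, uncurry K p.swap ∂ρ.prod ρ := by
      congr! 2
      · ext p
        simp
      · exact hsymm _ _
    _ = ∫ p in {p | p.2 < p.1}, uncurry K p ∂ρ.prod ρ :=
      Measure.measurePreserving_swap.setIntegral_preimage_emb
        MeasurableEquiv.prodComm.measurableEmbedding _ _
    _ = ∫ x, ∫ y in Iio x, K x y ∂ρ ∂ρ :=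
      setIntegral_prod_eq_integral_setIntegral hlt hK.integrableOn
    _ = ∫ x, ∫ y in Iic x, K x y ∂ρ ∂ρ := by simp only [integral_Iic_eq_integral_Iio]
  have hfull : ∫ x, ∫ y, K x y ∂ρ ∂ρ = (2 : ℝ) • ∫ x, ∫ y in Iic x, K x y ∂ρ ∂ρ := calc
    _ = ∫ p, uncurry K p ∂ρ.prod ρ := integral_integral hK
    _ = _ := by rw [← integral_add_compl hle hK, hlower, hupper, two_smul]
  rw [hfull, one_div, inv_smul_smul₀ two_ne_zero]

end SymmetricKernel

section PositiveType

lemma integral_prod_cos_sub_mul {α : Type*} [MeasurableSpace α] {ρ : Measure α} [SFinite ρ]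
    {φ f : α → ℝ} (hφ : AEMeasurable φ ρ) (hf : Integrable f ρ) :
    ∫ p, Real.cos (φ p.1 - φ p.2) * (f p.1 * f p.2) ∂ρ.prod ρ
      = ‖∫ s, Complex.exp (-(Complex.I * φ s)) * f s ∂ρ‖ ^ 2 := by
  let u : α → ℂ := fun s ↦ Complex.exp (-(Complex.I * φ s)) * f s
  have hu : Integrable u ρ := by
    refine hf.ofReal.bdd_mul (c := 1) ?_ (.of_forall fun s ↦ ?_)
    · exact (by fun_prop : AEMeasurable _ ρ).aestronglyMeasurable
    · simp [Complex.norm_exp]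
  have hconj : Integrable (fun s ↦ conj (u s)) ρ :=
    Complex.conjCLE.toContinuousLinearMap.integrable_comp hu
  have hre (p : α × α) :
      Real.cos (φ p.1 - φ p.2) * (f p.1 * f p.2) = (u p.1 * conj (u p.2)).re := by
    have : u p.1 * conj (u p.2)
        = Complex.exp ((φ p.2 - φ p.1 : ℝ) * Complex.I) * (f p.1 * f p.2 : ℝ) := by
      simp only [u, map_mul, ← Complex.exp_conj, Complex.conj_ofReal, map_neg, Complex.conj_I]
      rw [mul_mul_mul_comm, ← Complex.exp_add]
      push_cast
      ring_nf
    rw [this, Complex.re_mul_ofReal, Complex.exp_ofReal_mul_I_re, ← Real.cos_neg, neg_sub]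
  simp only [hre]
  calc ∫ p, (u p.1 * conj (u p.2)).re ∂ρ.prod ρ
      = (∫ p, u p.1 * conj (u p.2) ∂ρ.prod ρ).re := integral_re (hu.mul_prod hconj)
    _ = ((∫ s, u s ∂ρ) * conj (∫ s, u s ∂ρ)).re := by
      rw [integral_prod_mul u fun s ↦ conj (u s), integral_conj]
    _ = ‖∫ s, u s ∂ρ‖ ^ 2 := by
      rw [Complex.mul_conj, Complex.ofReal_re, Complex.normSq_eq_norm_sq]

variable {V : Type*} [NormedAddCommGroup V] [InnerProductSpace ℝ V] [MeasurableSpace V]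
  {m ρ : Measure V}

/-- The function `t ↦ ∫ (cos ⟪ν, t⟫ - 1) m(dν)`, whose translation kernel is conditionally positive
semidefinite. It is written through `charFun` so that measurability and bounds come for free. -/
noncomputable def centeredCharFun (m : Measure V) (t : V) : ℝ :=
  (charFun m t).re - m.real univ

lemma centeredCharFun_neg (t : V) : centeredCharFun m (-t) = centeredCharFun m t := by
  rw [centeredCharFun, charFun_neg, Complex.conj_re, centeredCharFun]

variable [BorelSpace V] [IsFiniteMeasure m]

lemma re_charFun (t : V) : (charFun m t).re = ∫ ν, Real.cos ⟪ν, t⟫ ∂m := by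
  have hint : Integrable (fun ν ↦ Complex.exp (⟪ν, t⟫ * Complex.I)) m :=
    .of_bound (by fun_prop) 1 (.of_forall fun ν ↦ (Complex.norm_exp_ofReal_mul_I _).le)
  rw [charFun_apply]
  calc (∫ ν, Complex.exp (⟪ν, t⟫ * Complex.I) ∂m).re
      = ∫ ν, (Complex.exp (⟪ν, t⟫ * Complex.I)).re ∂m := (integral_re hint).symm
    _ = ∫ ν, Real.cos ⟪ν, t⟫ ∂m := by simp only [Complex.exp_ofReal_mul_I_re]

lemma centeredCharFun_eq_integral (t : V) :
    centeredCharFun m t = ∫ ν, (Real.cos ⟪ν, t⟫ - 1) ∂m := by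
  have hcos : Integrable (fun ν ↦ Real.cos ⟪ν, t⟫) m :=
    .of_bound (by fun_prop) 1 (.of_forall fun ν ↦ Real.abs_cos_le_one _)
  rw [centeredCharFun, re_charFun, integral_sub hcos (integrable_const 1), integral_const,
    smul_eq_mul, mul_one]

variable [SecondCountableTopology V] {f : V → ℝ}

lemma integrable_prod_re_charFun_sub_mul (hf : Integrable f ρ) :
    Integrable (fun p : V × V ↦ (charFun m (p.1 - p.2)).re * (f p.1 * f p.2)) (ρ.prod ρ) := by
  refine (hf.mul_prod hf).bdd_mul (c := m.real univ) ?_ (.of_forall fun p ↦ ?_)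
  · exact (Complex.measurable_re.comp
      (measurable_charFun.comp measurable_sub)).aestronglyMeasurable
  · exact (Complex.abs_re_le_norm _).trans (norm_charFun_le _)

lemma integral_prod_re_charFun_sub_mul [SFinite ρ] (hf : Integrable f ρ) :
    ∫ p, (charFun m (p.1 - p.2)).re * (f p.1 * f p.2) ∂ρ.prod ρ
      = ∫ ν, ‖∫ s, Complex.exp (-(Complex.I * ⟪ν, s⟫)) * f s ∂ρ‖ ^ 2 ∂m := by
  have hint : Integrable (uncurry fun (p : V × V) ν ↦
      Real.cos (⟪ν, p.1⟫ - ⟪ν, p.2⟫) * (f p.1 * f p.2)) ((ρ.prod ρ).prod m) := by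
    refine ((hf.mul_prod hf).comp_fst m).bdd_mul (c := 1) ?_ (.of_forall fun x ↦ ?_)
    · exact Continuous.aestronglyMeasurable (by fun_prop)
    · exact Real.abs_cos_le_one _
  calc ∫ p, (charFun m (p.1 - p.2)).re * (f p.1 * f p.2) ∂ρ.prod ρ
      = ∫ p, ∫ ν, Real.cos (⟪ν, p.1⟫ - ⟪ν, p.2⟫) * (f p.1 * f p.2) ∂m ∂ρ.prod ρ := by
        simp only [re_charFun, inner_sub_right, integral_mul_const]
    _ = ∫ ν, ∫ p, Real.cos (⟪ν, p.1⟫ - ⟪ν, p.2⟫) * (f p.1 * f p.2) ∂ρ.prod ρ ∂m :=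
        integral_integral_swap hint
    _ = _ := by
        refine integral_congr_ae (.of_forall fun ν ↦ ?_)
        exact integral_prod_cos_sub_mul (by fun_prop) hf

lemma integrable_prod_centeredCharFun_sub_mul (hf : Integrable f ρ) :
    Integrable (fun p : V × V ↦ centeredCharFun m (p.1 - p.2) * (f p.1 * f p.2)) (ρ.prod ρ) := by
  simp only [centeredCharFun, sub_mul]
  exact (integrable_prod_re_charFun_sub_mul hf).sub ((hf.mul_prod hf).const_mul _)

lemma integral_prod_centeredCharFun_sub_mul [SFinite ρ] (hf : Integrable f ρ) :
    ∫ p, centeredCharFun m (p.1 - p.2) * (f p.1 * f p.2) ∂ρ.prod ρ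
      = ∫ ν, ‖∫ s, Complex.exp (-(Complex.I * ⟪ν, s⟫)) * f s ∂ρ‖ ^ 2 ∂m
        - m.real univ * (∫ s, f s ∂ρ) ^ 2 := by
  simp only [centeredCharFun, sub_mul]
  rw [integral_sub (integrable_prod_re_charFun_sub_mul hf) ((hf.mul_prod hf).const_mul _),
    integral_prod_re_charFun_sub_mul hf, integral_const_mul, integral_prod_mul, ← sq]

end PositiveType

section SignedMeasure

lemma integrable_variation_of_bound {X F : Type*} [MeasurableSpace X] [NormedAddCommGroup F]
    (ν : SignedMeasure X) {f : X → F} (hf : AEStronglyMeasurable f ν.variation) {C : ℝ}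
    (hC : ∀ x, ‖f x‖ ≤ C) : ν.Integrable f := by
  have : IsFiniteMeasure ν.variation := by
    rw [← ν.totalVariation_eq_variation]
    infer_instance
  exact .of_bound hf C (.of_forall hC)

lemma sintegral_eq_integral {ν : SignedMeasure ℝ} {f : ℝ → ℝ} (hf : ν.Integrable f) :
    sintegral ν f = ∫ᵛ x, f x ∂<•ν := by
  have hparts :
      Integrable f (ν.toJordanDecomposition.posPart + ν.toJordanDecomposition.negPart) := by
    rwa [VectorMeasure.Integrable, ← ν.totalVariation_eq_variation] at hf
  conv_rhs => rw [← ν.toSignedMeasure_toJordanDecomposition, JordanDecomposition.toSignedMeasure]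
  rw [VectorMeasure.integral_sub_vectorMeasure, VectorMeasure.integral_toSignedMeasure,
    VectorMeasure.integral_toSignedMeasure, sintegral]
  · rw [VectorMeasure.Integrable, Measure.variation_toSignedMeasure]
    exact hparts.left_of_add_measure
  · rw [VectorMeasure.Integrable, Measure.variation_toSignedMeasure]
    exact hparts.right_of_add_measure

variable {d : ℕ} {M : Fin d → Fin d → SignedMeasure ℝ} {w : Fin d → ℝ} {m : Measure ℝ}
  [IsFiniteMeasure m]

lemma toSignedMeasure_eq_sum_of_quadForm
    (hm : ∀ X, MeasurableSet X → m.real X = quadForm w (Matrix.of fun k q ↦ M k q X)) :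
    m.toSignedMeasure = ∑ k, ∑ q, (w k * w q) • M k q := by
  ext X hX
  simp [Measure.toSignedMeasure_apply_measurable hX, hm X hX, quadForm, mul_right_comm]

lemma quadForm_sintegral_eq_integral
    (hm : ∀ X, MeasurableSet X → m.real X = quadForm w (Matrix.of fun k q ↦ M k q X))
    {f : ℝ → ℝ} (hf : ∀ k q, (M k q).Integrable f) :
    quadForm w (Matrix.of fun k q ↦ sintegral (M k q) f) = ∫ x, f x ∂m := by
  have hterm (k q : Fin d) : ((w k * w q) • M k q).Integrable f :=
    (hf k q).smul_vectorMeasure _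
  rw [← VectorMeasure.integral_toSignedMeasure, toSignedMeasure_eq_sum_of_quadForm hm,
    VectorMeasure.integral_finsetSum_vectorMeasure fun k _ ↦
      VectorMeasure.Integrable.finsetSum_vectorMeasure fun q _ ↦ hterm k q]
  simp only [VectorMeasure.integral_finsetSum_vectorMeasure fun q _ ↦ hterm _ q,
    VectorMeasure.integral_smul_vectorMeasure, ← sintegral_eq_integral (hf _ _), quadForm,
    Matrix.of_apply, smul_eq_mul, mul_right_comm]

/-- `Ξ` for an arbitrary matrix of finite signed measures. -/
noncomputable def cosMatrix (M : Fin d → Fin d → SignedMeasure ℝ) (t : ℝ) :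
    Matrix (Fin d) (Fin d) ℝ :=
  Matrix.of fun k q ↦ sintegral (M k q) fun ν ↦ Real.cos (t * ν) - 1

lemma quadForm_cosMatrix
    (hm : ∀ X, MeasurableSet X → m.real X = quadForm w (Matrix.of fun k q ↦ M k q X)) (t : ℝ) :
    quadForm w (cosMatrix M t) = centeredCharFun m t := by
  have hbound (ν : ℝ) : ‖Real.cos (t * ν) - 1‖ ≤ 2 := by
    rw [Real.norm_eq_abs, abs_le]
    constructor <;> linarith [Real.cos_le_one (t * ν), Real.neg_one_le_cos (t * ν)]
  rw [cosMatrix, quadForm_sintegral_eq_integral hm fun k q ↦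
    integrable_variation_of_bound _ (by fun_prop) hbound, centeredCharFun_eq_integral]
  simp only [Real.inner_apply, mul_comm]

end SignedMeasure

theorem statement3_general {d : ℕ} {M : Fin d → Fin d → SignedMeasure ℝ} {w : Fin d → ℝ}
    {m : Measure ℝ} [IsFiniteMeasure m]
    (hm : ∀ X, MeasurableSet X → m.real X = quadForm w (Matrix.of fun k q ↦ M k q X))
    {f : ℝ → ℝ} (hf : Integrable f) :
    ∫ s₁, ∫ s₂, quadForm w (cosMatrix M (s₁ - s₂)) * f s₁ * f s₂
        = (∫ ν : ℝ, ‖∫ s : ℝ, Complex.exp (-(Complex.I * ν * s)) * f s‖ ^ 2 ∂m)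
          - m.real univ * (∫ s, f s) ^ 2 ∧
    ∫ s₁, (∫ s₂ in Iic s₁, quadForm w (cosMatrix M (s₁ - s₂)) * f s₂) * f s₁
        = (1 / 2) * ((∫ ν : ℝ, ‖∫ s : ℝ, Complex.exp (-(Complex.I * ν * s)) * f s‖ ^ 2 ∂m)
          - m.real univ * (∫ s, f s) ^ 2) := by
  let K : ℝ → ℝ → ℝ := fun s₁ s₂ ↦ centeredCharFun m (s₁ - s₂) * (f s₁ * f s₂)
  have hK : Integrable (uncurry K) (volume.prod volume) :=
    integrable_prod_centeredCharFun_sub_mul hf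
  have hsymm (s₁ s₂ : ℝ) : K s₁ s₂ = K s₂ s₁ := by
    simp only [K, ← centeredCharFun_neg (s₁ - s₂), neg_sub, mul_comm (f s₁)]
  have hfull : ∫ s₁, ∫ s₂, K s₁ s₂
      = (∫ ν : ℝ, ‖∫ s : ℝ, Complex.exp (-(Complex.I * ν * s)) * f s‖ ^ 2 ∂m)
          - m.real univ * (∫ s, f s) ^ 2 := by
    rw [integral_integral hK, integral_prod_centeredCharFun_sub_mul hf]
    simp only [Real.inner_apply, mul_assoc, Complex.ofReal_mul]
  have hker (s₁ s₂ : ℝ) : quadForm w (cosMatrix M (s₁ - s₂)) * f s₁ * f s₂ = K s₁ s₂ := by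
    rw [quadForm_cosMatrix hm, mul_assoc]
  have hker' (s₁ s₂ : ℝ) : quadForm w (cosMatrix M (s₁ - s₂)) * f s₂ * f s₁ = K s₁ s₂ := by
    rw [mul_right_comm, hker]
  simp only [← integral_mul_const, hker, hker', ← hfull, true_and]
  exact integral_integral_Iic_eq_half_of_symm hK hsymm

/-- Let `d ≥ 1`, let `μ` be a finite positive-semidefinite-matrix-valued Borel
measure on `ℝ`, `w ∈ ℝ^d`, and let `Ξ` be the associated matrix-valued function. Let `mw` be
the finite positive Borel measure `X ↦ ⟨w, μ(X) w⟩`, and let `E : ℝ → ℝ` be a Schwartz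
function with `∫ E = 0` and Fourier transform `Ê`. Then
`∫∫ ⟨w, Ξ(s₁−s₂) w⟩ E(s₁) E(s₂) ds₂ ds₁ = ∫ |Ê(ν)|² ⟨w, μ(dν) w⟩` and
`∫ (∫_{−∞}^{s₁} ⟨w, Ξ(s₁−s₂) w⟩ E(s₂) ds₂) E(s₁) ds₁ = ½ ∫ |Ê(ν)|² ⟨w, μ(dν) w⟩`;
in particular both quantities are nonnegative. -/
theorem statement3 {d : ℕ} (hd : 1 ≤ d) (μ : MatrixMeasure d) (w : Fin d → ℝ)
    (mw : Measure ℝ) (hfin : IsFiniteMeasure mw)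
    (hmw : ∀ X : Set ℝ, MeasurableSet X →
      (mw X).toReal = quadForm w (Matrix.of fun k q => μ.entry k q X))
    (E : SchwartzMap ℝ ℝ) (hE : ∫ s : ℝ, E s = 0) :
    (∫ s₁ : ℝ, ∫ s₂ : ℝ, quadForm w (Xi μ (s₁ - s₂)) * E s₁ * E s₂)
        = ∫ ν : ℝ, ‖fhat E ν‖ ^ 2 ∂mw ∧
    (∫ s₁ : ℝ, (∫ s₂ in Set.Iic s₁, quadForm w (Xi μ (s₁ - s₂)) * E s₂) * E s₁)
        = (1/2) * ∫ ν : ℝ, ‖fhat E ν‖ ^ 2 ∂mw ∧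
    0 ≤ ∫ ν : ℝ, ‖fhat E ν‖ ^ 2 ∂mw := by
  obtain ⟨hfull, hhalf⟩ := statement3_general (M := μ.entry) hmw E.integrable
  simp only [hE, zero_pow two_ne_zero, mul_zero, sub_zero] at hfull hhalf
  exact ⟨hfull, hhalf, integral_nonneg fun ν ↦ sq_nonneg _⟩
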